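/- For every natural number n ≥ 3, the characteristic polynomial of the n-th power of the 3×3 rational matrix H = [[1,1,1],[1,0,0],[0,1,0]] is y³ - K_n·y² + R_n·y - 1, where K_n = (9H_{n+2} - 2H_{n+1} + 35H_n)/41 and R_n = (4H_nH_{n-1} + 2H_nH_{n-2} + 6H_nH_{n-3} + 6H_n² - 6H_{n+1}H_{n-1} - 6H_{n-1}H_{n-2} - 4H_{n+1}H_{n-2} + H_{n+1}H_{n-3} - 3H_{n-1}²)/41. -/

import Mathlib

open Polynomial

/-- The generalized Tribonacci sequence. -/
def genTrib : ℕ → ℤ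
  | 0 => 3
  | 1 => 0
  | 2 => 2
  | n + 3 => genTrib (n + 2) + genTrib (n + 1) + genTrib n

/-!
The matrix `H` has determinant `1`, so the characteristic polynomial of `H ^ n` is determined by the
traces of `H ^ n` and of `adj (H ^ n) = (adj H) ^ n`. By Cayley–Hamilton these traces satisfy the
linear recurrences with characteristic polynomials `X ^ 3 - X ^ 2 - X - 1` and
`X ^ 3 + X ^ 2 + X - 1`. So do, respectively, a linear form in three consecutive terms of the
sequence and a suitable quadratic form in them: in terms of the eigenvalues `αᵢ` of `H`, the
contributions `αᵢ ^ (2 * n)` to that form cancel and only those of `(αᵢ * αⱼ) ^ n = αₖ ^ (-n)`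
remain. Comparing three initial values identifies the traces with these forms, up to the factor
`41`.
-/

theorem genTrib_add_three (R : Type*) [AddGroupWithOne R] (n : ℕ) :
    (genTrib (n + 3) : R) = genTrib (n + 2) + genTrib (n + 1) + genTrib n := by
  simp [genTrib]

theorem eq_of_third_order_recurrence {R : Type*} [CommSemiring R] {p q r : R} {u v : ℕ → R}
    (hu : ∀ n, u (n + 3) = p * u (n + 2) + q * u (n + 1) + r * u n)
    (hv : ∀ n, v (n + 3) = p * v (n + 2) + q * v (n + 1) + r * v n)
    (h0 : u 0 = v 0) (h1 : u 1 = v 1) (h2 : u 2 = v 2) : u = v := by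
  let E : LinearRecurrence R := ⟨3, ![r, q, p]⟩
  have isSolution {w : ℕ → R} (hw : ∀ n, w (n + 3) = p * w (n + 2) + q * w (n + 1) + r * w n) :
      E.IsSolution w := fun n ↦
    calc w (n + 3) = r * w n + q * w (n + 1) + p * w (n + 2) := by rw [hw]; ring
      _ = ∑ i : Fin 3, ![r, q, p] i * w (n + i) :=
        (Fin.sum_univ_three fun i ↦ ![r, q, p] i * w (n + i)).symm
  refine (E.eq_iff_eqOn_range_order u v (isSolution hu) (isSolution hv)).2 fun k hk ↦ ?_
  have hk3 : k < 3 := Finset.mem_range.1 hk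
  interval_cases k <;> assumption

section FinThree

variable {R : Type*} [CommRing R] (A : Matrix (Fin 3) (Fin 3) R)

theorem charpoly_fin_three :
    A.charpoly = X ^ 3 - C A.trace * X ^ 2 + C A.adjugate.trace * X - C A.det := by
  rw [Matrix.charpoly, Matrix.det_fin_three, Matrix.det_fin_three, Matrix.trace_fin_three,
    Matrix.trace_fin_three, Matrix.adjugate_fin_three]
  simp only [Matrix.charmatrix_apply_eq, Matrix.charmatrix_apply_ne, ne_eq, Fin.reduceEq,
    zero_ne_one, one_ne_zero, not_false_eq_true, Matrix.of_apply, Matrix.cons_val, map_add, map_sub,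
    map_mul]
  ring

theorem trace_pow_add_three_fin_three (n : ℕ) :
    (A ^ (n + 3)).trace =
      A.trace * (A ^ (n + 2)).trace - A.adjugate.trace * (A ^ (n + 1)).trace +
        A.det * (A ^ n).trace := by
  have cayley_hamilton :
      A ^ 3 = A.trace • A ^ 2 - A.adjugate.trace • A + A.det • (1 : Matrix (Fin 3) (Fin 3) R) := by
    have aeval_eq_zero := A.aeval_self_charpoly
    simp only [charpoly_fin_three, map_sub, map_add, map_mul, map_pow, aeval_X, aeval_C,
      Algebra.algebraMap_eq_smul_one, smul_mul_assoc, one_mul] at aeval_eq_zero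
    rw [← sub_eq_zero, ← aeval_eq_zero]
    abel
  rw [pow_add, cayley_hamilton, pow_add, pow_succ A n]
  simp only [mul_add, mul_sub, mul_smul_comm, mul_one, Matrix.trace_add, Matrix.trace_sub,
    Matrix.trace_smul, smul_eq_mul]

theorem trace_sq_fin_three : (A ^ 2).trace = A.trace ^ 2 - 2 * A.adjugate.trace := by
  simp only [pow_two, Matrix.trace_fin_three, Matrix.mul_apply, Fin.sum_univ_three,
    Matrix.adjugate_fin_three, Matrix.of_apply, Matrix.cons_val]
  ring

end FinThree

section TribMatrix

variable (R : Type*) [CommRing R]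

/-- The companion matrix `H` of the Tribonacci recurrence, over an arbitrary ring of
coefficients. -/
def tribMatrix : Matrix (Fin 3) (Fin 3) R := !![1, 1, 1; 1, 0, 0; 0, 1, 0]

theorem trace_tribMatrix : (tribMatrix R).trace = 1 := by
  simp [tribMatrix, Matrix.trace_fin_three]

theorem det_tribMatrix : (tribMatrix R).det = 1 := by
  simp [tribMatrix, Matrix.det_fin_three]

theorem trace_adjugate_tribMatrix : (tribMatrix R).adjugate.trace = -1 := by
  simp [tribMatrix, Matrix.adjugate_fin_three_of, Matrix.trace_fin_three]

theorem adjugate_adjugate_tribMatrix : (tribMatrix R).adjugate.adjugate = tribMatrix R := by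
  simp [Matrix.adjugate_adjugate, det_tribMatrix]

theorem trace_tribMatrix_pow (n : ℕ) :
    41 * (tribMatrix R ^ n).trace =
      9 * genTrib (n + 2) - 2 * genTrib (n + 1) + 35 * genTrib n := by
  let t (k : ℕ) : R := 41 * (tribMatrix R ^ k).trace
  let l (k : ℕ) : R := 9 * genTrib (k + 2) - 2 * genTrib (k + 1) + 35 * genTrib k
  have t_rec (k : ℕ) : t (k + 3) = 1 * t (k + 2) + 1 * t (k + 1) + 1 * t k := by
    simp only [t, trace_pow_add_three_fin_three, trace_tribMatrix, trace_adjugate_tribMatrix,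
      det_tribMatrix]
    ring
  have l_rec (k : ℕ) : l (k + 3) = 1 * l (k + 2) + 1 * l (k + 1) + 1 * l k := by
    linear_combination 9 * genTrib_add_three R (k + 2) - 2 * genTrib_add_three R (k + 1) +
      35 * genTrib_add_three R k
  refine congrFun (eq_of_third_order_recurrence t_rec l_rec ?_ ?_ ?_) n
  · norm_num [t, l, genTrib]
  · norm_num [t, l, genTrib, trace_tribMatrix]
  · norm_num [t, l, genTrib, trace_sq_fin_three, trace_tribMatrix, trace_adjugate_tribMatrix]

-- The quadratic form is `41 * R_n` with the terms of index `n - 1`, `n - 2`, `n - 3` eliminated by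
-- the recurrence, so that no index is subtracted.
theorem trace_adjugate_tribMatrix_pow (n : ℕ) :
    41 * (tribMatrix R ^ n).adjugate.trace =
      11 * genTrib n ^ 2 + 6 * genTrib (n + 1) ^ 2 + 3 * genTrib (n + 2) ^ 2 +
        8 * genTrib n * genTrib (n + 1) + 2 * genTrib n * genTrib (n + 2) -
        14 * genTrib (n + 1) * genTrib (n + 2) := by
  let t (k : ℕ) : R := 41 * ((tribMatrix R).adjugate ^ k).trace
  let q (k : ℕ) : R :=
    11 * genTrib k ^ 2 + 6 * genTrib (k + 1) ^ 2 + 3 * genTrib (k + 2) ^ 2 +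
      8 * genTrib k * genTrib (k + 1) + 2 * genTrib k * genTrib (k + 2) -
      14 * genTrib (k + 1) * genTrib (k + 2)
  have t_rec (k : ℕ) : t (k + 3) = -1 * t (k + 2) + -1 * t (k + 1) + 1 * t k := by
    simp only [t, trace_pow_add_three_fin_three, adjugate_adjugate_tribMatrix,
      trace_adjugate_tribMatrix, trace_tribMatrix, Matrix.det_adjugate, det_tribMatrix]
    ring
  have q_rec (k : ℕ) : q (k + 3) = -1 * q (k + 2) + -1 * q (k + 1) + 1 * q k := by
    simp only [q, add_assoc, Nat.reduceAdd, genTrib_add_three R (k + 2),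
      genTrib_add_three R (k + 1), genTrib_add_three R k]
    ring
  rw [Matrix.adjugate_pow]
  refine congrFun (eq_of_third_order_recurrence t_rec q_rec ?_ ?_ ?_) n
  · norm_num [t, q, genTrib]
  · norm_num [t, q, genTrib, trace_adjugate_tribMatrix]
  · norm_num [t, q, genTrib, trace_sq_fin_three, adjugate_adjugate_tribMatrix, trace_tribMatrix,
      trace_adjugate_tribMatrix]

end TribMatrix

theorem charpoly_matrix_power_general {K : Type*} [Field K] (h41 : (41 : K) ≠ 0) (n : ℕ)
    (hn : 3 ≤ n) :
    (tribMatrix K ^ n).charpoly =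
      X ^ 3 -
        C ((9 * (genTrib (n + 2) : K) - 2 * (genTrib (n + 1) : K) + 35 * (genTrib n : K)) / 41) *
          X ^ 2 +
        C ((4 * (genTrib n : K) * (genTrib (n - 1) : K) +
            2 * (genTrib n : K) * (genTrib (n - 2) : K) +
            6 * (genTrib n : K) * (genTrib (n - 3) : K) + 6 * (genTrib n : K) ^ 2 -
            6 * (genTrib (n + 1) : K) * (genTrib (n - 1) : K) -
            6 * (genTrib (n - 1) : K) * (genTrib (n - 2) : K) -
            4 * (genTrib (n + 1) : K) * (genTrib (n - 2) : K) +
            (genTrib (n + 1) : K) * (genTrib (n - 3) : K) -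
            3 * (genTrib (n - 1) : K) ^ 2) / 41) * X - 1 := by
  have trace_eq := trace_tribMatrix_pow K n
  have trace_adjugate_eq := trace_adjugate_tribMatrix_pow K n
  rw [charpoly_fin_three, Matrix.det_pow, det_tribMatrix, one_pow, map_one]
  congr 5
  · rw [eq_div_iff h41]
    linear_combination trace_eq
  · rw [eq_div_iff h41]
    obtain ⟨m, rfl⟩ := Nat.exists_eq_add_of_le' hn
    simp only [Nat.add_sub_cancel, Nat.reduceSubDiff, add_assoc, Nat.reduceAdd,
      genTrib_add_three K (m + 2), genTrib_add_three K (m + 1), genTrib_add_three K m]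
      at trace_adjugate_eq ⊢
    linear_combination trace_adjugate_eq

theorem charpoly_matrix_power (n : ℕ) (hn : 3 ≤ n) :
    ((!![1, 1, 1; 1, 0, 0; 0, 1, 0] : Matrix (Fin 3) (Fin 3) ℚ) ^ n).charpoly =
      X ^ 3 -
        C ((9 * (genTrib (n + 2) : ℚ) - 2 * (genTrib (n + 1) : ℚ) + 35 * (genTrib n : ℚ)) / 41) *
          X ^ 2 +
        C ((4 * (genTrib n : ℚ) * (genTrib (n - 1) : ℚ) +
            2 * (genTrib n : ℚ) * (genTrib (n - 2) : ℚ) +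
            6 * (genTrib n : ℚ) * (genTrib (n - 3) : ℚ) + 6 * (genTrib n : ℚ) ^ 2 -
            6 * (genTrib (n + 1) : ℚ) * (genTrib (n - 1) : ℚ) -
            6 * (genTrib (n - 1) : ℚ) * (genTrib (n - 2) : ℚ) -
            4 * (genTrib (n + 1) : ℚ) * (genTrib (n - 2) : ℚ) +
            (genTrib (n + 1) : ℚ) * (genTrib (n - 3) : ℚ) -
            3 * (genTrib (n - 1) : ℚ) ^ 2) / 41) * X - 1 :=
  charpoly_matrix_power_general (by norm_num) n hn
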